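/- Deligne's completeness theorem for coherent categories: Let C be a small category with finite limits such that (i) every morphism of C factors as an effective epimorphism followed by a monomorphism; (ii) effective epimorphisms are stable under pullback, i.e. for every effective epimorphism f : X ⟶ Z and every morphism g : Y ⟶ Z, the pullback projection pullback.snd : X ×_Z Y ⟶ Y is an effective epimorphism; (iii) for every object X, any two elements a, b of the subobject poset Subobject X have a least upper bound and Subobject X has a least element, and for every morphism g : Y ⟶ X the pullback map Subobject X → Subobject Y carries these least upper bounds to least upper bounds and the least element to the least element; and (iv) C is consistent, meaning that for a terminal object of C the least element of its subobject poset is not the top element. Then there exists a functor F : C ⥤ Type such that: (1) F preserves finite limits; (2) for every effective epimorphism f of C, the function F.map f is surjective; (3) for every object X of C, whenever c is a least upper bound of subobjects a and b of X one has Set.range (F.map c.arrow) = Set.range (F.map a.arrow) ∪ Set.range (F.map b.arrow), and if z is the least element of Subobject X then Set.range (F.map z.arrow) = ∅. -/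

import Mathlib

open CategoryTheory Limits

set_option linter.unusedSectionVars false
set_option linter.unusedVariables false

namespace Deligne

open GrothendieckTopology.Point

variable {C : Type} [SmallCategory C]

instance initSmall (J : Type) [SmallCategory J] : InitiallySmall.{0} J :=
  initiallySmall_of_essentiallySmall J

instance initSmallEl (G : C ⥤ Type) : InitiallySmall.{0} G.Elements :=
  initSmall G.Elements

instance initSmallOver (G : C ⥤ Type) (e : G.Elements) : InitiallySmall.{0} (Over e) :=
  initSmall (Over e)

lemma lex_of_point (Φ : GrothendieckTopology.Point.{0} (⊥ : GrothendieckTopology C)) :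
    PreservesFiniteLimits Φ.fiber :=
  preservesFiniteLimits_of_natIso Φ.shrinkYonedaCompPresheafFiberIso

lemma lex_of_cofiltered (F : C ⥤ Type) [IsCofiltered F.Elements] : PreservesFiniteLimits F := by
  let Φ : GrothendieckTopology.Point.{0} (⊥ : GrothendieckTopology C) :=
    { fiber := F
      jointly_surjective := by
        intro X R hR x
        rw [GrothendieckTopology.bot_covering] at hR
        subst hR
        exact ⟨X, 𝟙 X, trivial, x, by simp⟩ }
  exact lex_of_point Φ

variable [HasFiniteLimits C]

/-- Lex functors which are empty on the objects satisfying `E`. -/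
def Good (E : C → Prop) (G : C ⥤ Type) : Prop :=
  PreservesFiniteLimits G ∧ ∀ X, E X → IsEmpty (G.obj X)

section diag

variable {J : Type} [SmallCategory J] (P : J ⥤ C) {X : C} (o : J) (p : X ⟶ P.obj o)

/-- The diagram of pullbacks. -/
noncomputable def diag : Over o ⥤ C where
  obj j := pullback p (P.map j.hom)
  map {j j'} k := pullback.lift (pullback.fst _ _) (pullback.snd _ _ ≫ P.map k.left) (by
    rw [pullback.condition, Category.assoc, ← P.map_comp, Over.w])
  map_id j := by
    apply pullback.hom_ext
    · simp
    · simp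
  map_comp f g := by
    apply pullback.hom_ext
    · refine (pullback.lift_fst _ _ _).trans (Eq.symm ?_)
      refine (Category.assoc _ _ _).trans ?_
      exact (congrArg _ (pullback.lift_fst _ _ _)).trans (pullback.lift_fst _ _ _)
    · refine (pullback.lift_snd _ _ _).trans (Eq.symm ?_)
      refine (Category.assoc _ _ _).trans ?_
      refine (congrArg _ (pullback.lift_snd _ _ _)).trans ?_
      refine (pullback.lift_snd_assoc _ _ _ _).trans ?_
      simp

/-- first projection -/
noncomputable def dFst (j : Over o) : (diag P o p).obj j ⟶ X := pullback.fst p (P.map j.hom)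

/-- second projection -/
noncomputable def dSnd (j : Over o) : (diag P o p).obj j ⟶ P.obj j.left :=
  pullback.snd p (P.map j.hom)

lemma dCond (j : Over o) : dFst P o p j ≫ p = dSnd P o p j ≫ P.map j.hom := pullback.condition

lemma diag_map_snd {j j' : Over o} (k : j ⟶ j') :
    (diag P o p).map k ≫ dSnd P o p j' = dSnd P o p j ≫ P.map k.left :=
  pullback.lift_snd _ _ _

/-- The element of the fiber associated with a morphism. -/
noncomputable def mkEl {e : J} (j : Over o) (q : j.left ⟶ e) :
    (ofIsCofiltered.fiber.{0} (diag P o p)).obj (P.obj e) :=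
  ofIsCofiltered.fiberMk.{0} (p := diag P o p) (U := j) (dSnd P o p j ≫ P.map q)

lemma mkEl_comp {e : J} {j j' : Over o} (s : j' ⟶ j) (q : j.left ⟶ e) :
    mkEl P o p j q = mkEl P o p j' (s.left ≫ q) := by
  unfold mkEl
  rw [← ofIsCofiltered.fiberMk_map_comp (p := diag P o p) s]
  congr 1
  rw [← Category.assoc, diag_map_snd, Category.assoc, P.map_comp]

lemma mkEl_map {e e' : J} (j : Over o) (q : j.left ⟶ e) (f : e ⟶ e') :
    (ofIsCofiltered.fiber.{0} (diag P o p)).map (P.map f) (mkEl P o p j q) =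
      mkEl P o p j (q ≫ f) := by
  unfold mkEl
  rw [ofIsCofiltered.fiber_map_fiberMk]
  congr 1
  rw [Category.assoc, P.map_comp]

lemma key [IsCofiltered J] {e : J} (j j' : Over o) (q : j.left ⟶ e) (q' : j'.left ⟶ e) :
    mkEl P o p j q = mkEl P o p j' q' := by
  let m := IsCofiltered.min j j'
  let l : m ⟶ j := IsCofiltered.minToLeft j j'
  let r : m ⟶ j' := IsCofiltered.minToRight j j'
  let n := IsCofiltered.eq (l.left ≫ q) (r.left ≫ q')
  let t : n ⟶ m.left := IsCofiltered.eqHom _ _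
  have ht : t ≫ l.left ≫ q = t ≫ r.left ≫ q' := IsCofiltered.eq_condition _ _
  let m' : Over o := Over.mk (t ≫ m.hom)
  let s : m' ⟶ m := Over.homMk t
  rw [mkEl_comp P o p (s ≫ l), mkEl_comp P o p (s ≫ r)]
  congr 1
  simpa [s] using ht

lemma key_lift (j₀ : Over o) :
    (ofIsCofiltered.fiber.{0} (diag P o p)).map p
      (ofIsCofiltered.fiberMk.{0} (p := diag P o p) (U := j₀) (dFst P o p j₀)) =
      mkEl P o p j₀ j₀.hom := by
  unfold mkEl
  rw [ofIsCofiltered.fiber_map_fiberMk]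
  congr 1
  exact dCond P o p j₀

end diag

lemma lift_one (E : C → Prop) (hE : ∀ {X Y : C} (_ : X ⟶ Y), E Y → E X)
    (G : C ⥤ Type) [PreservesFiniteLimits G] {X Y : C} (p : X ⟶ Y) (y : G.obj Y)
    (hp : ∀ (Z : C) (z : G.obj Z) (h : Z ⟶ Y), G.map h z = y → ¬ E (pullback p h)) :
    ∃ (G' : C ⥤ Type) (α : G ⟶ G'), Good E G' ∧ ∃ x, G'.map p x = α.app Y y := by
  have := G.isCofiltered_elements
  let P := CategoryOfElements.π G
  let o : G.Elements := G.elementsMk Y y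
  let p' : X ⟶ P.obj o := p
  let D := diag P o p'
  let j (e : G.Elements) : Over o := Over.mk (IsCofiltered.minToLeft _ e)
  let q (e : G.Elements) : (j e).left ⟶ e := IsCofiltered.minToRight _ e
  let α : G ⟶ ofIsCofiltered.fiber.{0} D :=
    { app W := ↾(fun w => mkEl P o p' (j (G.elementsMk W w)) (q (G.elementsMk W w)))
      naturality := by
        intro W W' f
        ext w
        let g : G.elementsMk W w ⟶ G.elementsMk W' (G.map f w) :=
          CategoryOfElements.homMk _ _ f rfl
        exact (key P o p' (j (G.elementsMk W' (G.map f w))) (j (G.elementsMk W w))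
          (q (G.elementsMk W' (G.map f w))) (q (G.elementsMk W w) ≫ g)).trans
          (mkEl_map P o p' _ (q (G.elementsMk W w)) g).symm }
  refine ⟨_, α, ⟨lex_of_cofiltered _, ?_⟩, ?_⟩
  · intro W hW
    refine ⟨fun w => ?_⟩
    obtain ⟨U, f, rfl⟩ := ofIsCofiltered.fiberMk_jointly_surjective w
    exact hp _ U.left.snd U.hom.val U.hom.2 (hE f hW)
  · let j₀ : Over o := Over.mk (𝟙 _)
    exact ⟨_, (key_lift P o p' j₀).trans (key P o p' _ _ _ _)⟩

/-- Abstract binary covers. -/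
def Cov (E : C → Prop) {X₁ X₂ Y : C} (p₁ : X₁ ⟶ Y) (p₂ : X₂ ⟶ Y) : Prop :=
  ∀ (Z : C) (h : Z ⟶ Y), E (pullback p₁ h) → E (pullback p₂ h) → E Z

/-- An abstract cover task. -/
structure Task (E : C → Prop) (G : C ⥤ Type) : Type where
  Y : C
  y : G.obj Y
  X₁ : C
  X₂ : C
  p₁ : X₁ ⟶ Y
  p₂ : X₂ ⟶ Y
  cov : Cov E p₁ p₂

/-- A task is solved after applying `α`. -/
def Task.Solved {E : C → Prop} {G : C ⥤ Type} (t : Task E G) {G' : C ⥤ Type} (α : G ⟶ G') : Prop :=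
  (∃ x, G'.map t.p₁ x = α.app t.Y t.y) ∨ (∃ x, G'.map t.p₂ x = α.app t.Y t.y)

lemma Task.Solved.comp {E : C → Prop} {G : C ⥤ Type} {t : Task E G} {G' G'' : C ⥤ Type}
    {α : G ⟶ G'} (h : t.Solved α) (β : G' ⟶ G'') : t.Solved (α ≫ β) := by
  rcases h with ⟨x, hx⟩ | ⟨x, hx⟩
  · refine Or.inl ⟨β.app _ x, ?_⟩
    rw [← NatTrans.naturality_apply, hx]; rfl
  · refine Or.inr ⟨β.app _ x, ?_⟩
    rw [← NatTrans.naturality_apply, hx]; rfl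

lemma solve_one (E : C → Prop) (hE : ∀ {X Y : C} (_ : X ⟶ Y), E Y → E X)
    (G : C ⥤ Type) (hG : Good E G) (t : Task E G) :
    ∃ (G' : C ⥤ Type) (α : G ⟶ G'), Good E G' ∧ t.Solved α := by
  have := hG.1
  have := G.isCofiltered_elements
  by_cases h1 : ∀ (Z : C) (z : G.obj Z) (h : Z ⟶ t.Y), G.map h z = t.y → ¬ E (pullback t.p₁ h)
  · obtain ⟨G', α, h, h'⟩ := lift_one E hE G t.p₁ t.y h1
    exact ⟨G', α, h, Or.inl h'⟩
  by_cases h2 : ∀ (Z : C) (z : G.obj Z) (h : Z ⟶ t.Y), G.map h z = t.y → ¬ E (pullback t.p₂ h)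
  · obtain ⟨G', α, h, h'⟩ := lift_one E hE G t.p₂ t.y h2
    exact ⟨G', α, h, Or.inr h'⟩
  exfalso
  push Not at h1 h2
  obtain ⟨Z₁, z₁, k₁, hk₁, e₁⟩ := h1
  obtain ⟨Z₂, z₂, k₂, hk₂, e₂⟩ := h2
  let f₁ : G.elementsMk Z₁ z₁ ⟶ G.elementsMk t.Y t.y := CategoryOfElements.homMk _ _ k₁ hk₁
  let f₂ : G.elementsMk Z₂ z₂ ⟶ G.elementsMk t.Y t.y := CategoryOfElements.homMk _ _ k₂ hk₂
  obtain ⟨W, l, r, hlr⟩ := IsCofiltered.cospan f₁ f₂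
  have hlr' : l.val ≫ k₁ = r.val ≫ k₂ := congrArg Subtype.val hlr
  have hW : E W.fst := by
    apply t.cov W.fst (l.val ≫ k₁)
    · refine hE (Y := pullback t.p₁ k₁) (pullback.lift (pullback.fst _ _) (pullback.snd _ _ ≫ l.val) ?_) e₁
      rw [pullback.condition, Category.assoc]
    · refine hE (Y := pullback t.p₂ k₂) (pullback.lift (pullback.fst _ _) (pullback.snd _ _ ≫ r.val) ?_) e₂
      rw [pullback.condition, Category.assoc, hlr']
  exact (hG.2 _ hW).false W.snd

/-- Transport of tasks. -/
def Task.push {E : C → Prop} {G G' : C ⥤ Type} (t : Task E G) (α : G ⟶ G') : Task E G' :=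
  { t with y := α.app t.Y t.y }

lemma solve_finset (E : C → Prop) (hE : ∀ {X Y : C} (_ : X ⟶ Y), E Y → E X)
    (G : C ⥤ Type) (hG : Good E G) (S : Finset (Task E G)) :
    ∃ (G' : C ⥤ Type) (α : G ⟶ G'), Good E G' ∧ ∀ t ∈ S, t.Solved α := by
  classical
  induction S using Finset.induction_on with
  | empty => exact ⟨G, 𝟙 G, hG, by simp⟩
  | insert t S _ ih =>
    obtain ⟨G', α, h, hS⟩ := ih
    obtain ⟨G'', β, h', ht⟩ := solve_one E hE G' h (t.push α)
    refine ⟨G'', α ≫ β, h', ?_⟩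
    intro s hs
    rcases Finset.mem_insert.1 hs with rfl | hs
    · exact ht
    · exact (hS s hs).comp β

lemma good_colimit (E : C → Prop) {J : Type} [SmallCategory J] [IsFiltered J] (K : J ⥤ C ⥤ Type)
    (hK : ∀ j, Good E (K.obj j)) : Good E (colimit K) := by
  constructor
  · exact ObjectProperty.prop_colimit ObjectProperty.preservesFiniteLimits K (fun j => (hK j).1)
  · intro X hX
    refine ⟨fun x => ?_⟩
    obtain ⟨j, x, -⟩ := Types.jointly_surjective_of_isColimit
      (isColimitOfPreserves ((evaluation _ _).obj X) (colimit.isColimit K)) x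
    exact ((hK j).2 X hX).false x

section ultra

variable {I : Type} (Gs : I → C ⥤ Type)

/-- Partial product. -/
def prodF (U : Set I) : C ⥤ Type where
  obj W := ∀ i : U, (Gs i).obj W
  map f := ↾(fun x i => (Gs i).map f (x i))
  map_id W := by ext x i; simp
  map_comp f g := by ext x i; simp

/-- Projection. -/
def prodProj (U : Set I) (i : U) : prodF Gs U ⟶ Gs i where
  app W := ↾(fun x => x i)
  naturality _ _ f := rfl

lemma prodF_lex (hG : ∀ i, PreservesFiniteLimits (Gs i)) (U : Set I) :
    PreservesFiniteLimits (prodF Gs U) := by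
  refine ⟨fun J _ _ => ⟨fun {D} => ⟨fun {c} hc => ⟨?_⟩⟩⟩⟩
  let cc (s : Cone (D ⋙ prodF Gs U)) (i : U) : Cone (D ⋙ Gs i) :=
    (Cone.postcompose (Functor.whiskerLeft D (prodProj Gs U i))).obj s
  let hl (i : U) := isLimitOfPreserves (Gs i) hc
  exact
    { lift s := ↾(fun x i => (hl i).lift (cc s i) x)
      fac s j := by
        ext x
        funext i
        exact ConcreteCategory.congr_hom ((hl i).fac (cc s i) j) x
      uniq s m hm := by
        ext x
        funext i
        have := (hl i).uniq (cc s i) (m ≫ (prodProj Gs U i).app c.pt) (fun j => by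
          ext x
          exact congrFun (ConcreteCategory.congr_hom (hm j) x) i)
        exact ConcreteCategory.congr_hom this x }

variable (𝒰 : Ultrafilter I)

/-- The diagram of partial products. -/
def ultraK : {U : Set I // U ∈ 𝒰}ᵒᵖ ⥤ C ⥤ Type where
  obj U := prodF Gs U.unop.1
  map h :=
    { app W := ↾(fun x i => x ⟨i.1, h.unop.le i.2⟩)
      naturality _ _ f := rfl }
  map_id _ := rfl
  map_comp _ _ := rfl

instance : IsCofiltered {U : Set I // U ∈ 𝒰} := by
  have : Nonempty {U : Set I // U ∈ 𝒰} := ⟨⟨Set.univ, Filter.univ_mem⟩⟩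
  have : IsCodirectedOrder {U : Set I // U ∈ 𝒰} := ⟨fun a b =>
    ⟨⟨a.1 ∩ b.1, Filter.inter_mem a.2 b.2⟩, Set.inter_subset_left, Set.inter_subset_right⟩⟩
  infer_instance

lemma good_ultra (E : C → Prop) (hG : ∀ i, Good E (Gs i)) : Good E (colimit (ultraK Gs 𝒰)) := by
  apply good_colimit
  intro U
  refine ⟨prodF_lex Gs (fun i => (hG i).1) _, fun X hX => ⟨fun x => ?_⟩⟩
  obtain ⟨i, hi⟩ := 𝒰.nonempty_of_mem U.unop.2
  exact ((hG i).2 X hX).false (x ⟨i, hi⟩)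

lemma ultra_solve (G : C ⥤ Type) (αs : ∀ i, G ⟶ Gs i) :
    ∃ α : G ⟶ colimit (ultraK Gs 𝒰), ∀ (X Y : C) (p : X ⟶ Y) (y : G.obj Y),
      {i | ∃ x, (Gs i).map p x = (αs i).app Y y} ∈ 𝒰 →
      ∃ x, (colimit (ultraK Gs 𝒰)).map p x = α.app Y y := by
  let β : G ⟶ prodF Gs Set.univ :=
    { app W := ↾(fun x i => (αs i).app W x)
      naturality W W' f := by
        ext x
        funext i
        exact NatTrans.naturality_apply (αs i) f x }
  let u : {U : Set I // U ∈ 𝒰} := ⟨Set.univ, Filter.univ_mem⟩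
  refine ⟨β ≫ colimit.ι (ultraK Gs 𝒰) (Opposite.op u), ?_⟩
  intro X Y p y hA
  let A : {U : Set I // U ∈ 𝒰} := ⟨_, hA⟩
  choose x hx using fun i : A.1 => i.2
  let x' : ((ultraK Gs 𝒰).obj (Opposite.op A)).obj X := x
  let f : A ⟶ u := homOfLE (Set.subset_univ _)
  refine ⟨(colimit.ι (ultraK Gs 𝒰) (Opposite.op A)).app X x', ?_⟩
  rw [← NatTrans.naturality_apply]
  have h1 : ((ultraK Gs 𝒰).obj (Opposite.op A)).map p x' =
      ((ultraK Gs 𝒰).map f.op).app Y (β.app Y y) := by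
    funext i
    exact hx i
  rw [h1]
  have h2 := colimit.w (ultraK Gs 𝒰) f.op
  exact ConcreteCategory.congr_hom (congrArg (fun γ => γ.app Y) h2) (β.app Y y)

end ultra

lemma solve_all (E : C → Prop) (hE : ∀ {X Y : C} (_ : X ⟶ Y), E Y → E X)
    (G : C ⥤ Type) (hG : Good E G) :
    ∃ (G' : C ⥤ Type) (α : G ⟶ G'), Good E G' ∧ ∀ t : Task E G, t.Solved α := by
  classical
  choose Gs αs hGs hS using solve_finset E hE G hG
  let 𝒰 : Ultrafilter (Finset (Task E G)) := Ultrafilter.of Filter.atTop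
  obtain ⟨α, hα⟩ := ultra_solve Gs 𝒰 G αs
  refine ⟨_, α, good_ultra Gs 𝒰 E hGs, fun t => ?_⟩
  have h1 : {S : Finset (Task E G) | t ∈ S} ∈ 𝒰 := by
    apply Ultrafilter.of_le Filter.atTop
    filter_upwards [Filter.eventually_ge_atTop {t}] with S hS
    exact hS (Finset.mem_singleton_self t)
  have h2 : {S | ∃ x, (Gs S).map t.p₁ x = (αs S).app t.Y t.y} ∪
      {S | ∃ x, (Gs S).map t.p₂ x = (αs S).app t.Y t.y} ∈ 𝒰 :=
    Filter.mem_of_superset h1 (fun S hSt => hS S t hSt)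
  rcases Ultrafilter.union_mem_iff.1 h2 with h | h
  · exact Or.inl (hα _ _ _ _ h)
  · exact Or.inr (hα _ _ _ _ h)

lemma abstract_deligne (E : C → Prop) (hE : ∀ {X Y : C} (_ : X ⟶ Y), E Y → E X)
    (T : C) (hT : ¬ E T) :
    ∃ F : C ⥤ Type, Good E F ∧ ∀ {X₁ X₂ Y : C} (p₁ : X₁ ⟶ Y) (p₂ : X₂ ⟶ Y), Cov E p₁ p₂ →
      ∀ y, (∃ x, F.map p₁ x = y) ∨ (∃ x, F.map p₂ x = y) := by
  choose N α hN hS using solve_all (C := C) E hE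
  have h0 : Good E (coyoneda.obj (Opposite.op T)) :=
    ⟨inferInstance, fun X hX => ⟨fun f => hT (hE f hX)⟩⟩
  let S : ℕ → {G : C ⥤ Type // Good E G} := fun n =>
    Nat.rec ⟨_, h0⟩ (fun _ G => ⟨N G.1 G.2, hN G.1 G.2⟩) n
  let K : ℕ ⥤ C ⥤ Type := Functor.ofSequence (X := fun n => (S n).1)
    (fun n => α (S n).1 (S n).2)
  have hK : ∀ n, Good E (K.obj n) := fun n => (S n).2
  refine ⟨colimit K, good_colimit E K hK, ?_⟩
  intro X₁ X₂ Y p₁ p₂ hc y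
  obtain ⟨n, y, rfl⟩ := Types.jointly_surjective_of_isColimit
      (isColimitOfPreserves ((evaluation _ _).obj Y) (colimit.isColimit K)) y
  let t : Task E (S n).1 := ⟨Y, y, X₁, X₂, p₁, p₂, hc⟩
  have h1 := (hS (S n).1 (S n).2 t).comp (colimit.ι K (n + 1))
  have h2 : α (S n).1 (S n).2 ≫ colimit.ι K (n + 1) = colimit.ι K n := by
    have := colimit.w K (homOfLE (Nat.le_add_right n 1))
    rw [← this]
    congr 1
    exact (Functor.ofSequence_map_homOfLE_succ (X := fun n => (S n).1)
      (fun n => α (S n).1 (S n).2) n).symm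
  have h3 : t.Solved (colimit.ι K n) := by
    rw [← h2]
    exact h1
  exact h3

end Deligne

/-- Deligne's completeness theorem for (small, consistent) coherent categories:
there is a functor to `Type` preserving finite limits, carrying effective epimorphisms
to surjections, and inducing join-semilattice homomorphisms on subobject posets. -/
theorem deligne_completeness
    (C : Type) [SmallCategory C] [HasFiniteLimits C]
    -- (i) every morphism factors as an effective epi followed by a mono
    (hfact : ∀ {X Z : C} (f : X ⟶ Z), ∃ (I : C) (e : X ⟶ I) (m : I ⟶ Z),
      EffectiveEpi e ∧ Mono m ∧ e ≫ m = f)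
    -- (ii) effective epimorphisms are stable under pullback
    (hstab : ∀ {X Y Z : C} (f : X ⟶ Z) (g : Y ⟶ Z), EffectiveEpi f →
      EffectiveEpi (pullback.snd f g))
    -- (iii) joins and least elements of subobject posets, preserved by pullback
    (hjoin : ∀ (X : C) (a b : Subobject X), ∃ c, IsLUB {a, b} c)
    (hbot : ∀ (X : C), ∃ z : Subobject X, ∀ a, z ≤ a)
    (hpull_join : ∀ {X Y : C} (g : Y ⟶ X) (a b c : Subobject X), IsLUB {a, b} c →
      IsLUB {(Subobject.pullback g).obj a, (Subobject.pullback g).obj b}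
        ((Subobject.pullback g).obj c))
    (hpull_bot : ∀ {X Y : C} (g : Y ⟶ X) (z : Subobject X), (∀ a, z ≤ a) →
      ∀ a, (Subobject.pullback g).obj z ≤ a)
    -- (iv) consistency: for a terminal object the least subobject is not the top one
    (T : C) (hT : IsTerminal T)
    (hcons : ∀ z : Subobject T, (∀ a, z ≤ a) → z ≠ ⊤) :
    ∃ F : C ⥤ Type,
      Nonempty (PreservesFiniteLimits F) ∧
      (∀ {X Y : C} (f : X ⟶ Y), EffectiveEpi f → Function.Surjective (F.map f)) ∧
      (∀ (X : C) (a b c : Subobject X), IsLUB {a, b} c →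
        Set.range (F.map c.arrow) = Set.range (F.map a.arrow) ∪ Set.range (F.map b.arrow)) ∧
      (∀ (X : C) (z : Subobject X), (∀ a, z ≤ a) →
        Set.range (F.map z.arrow) = ∅) := by
  classical
  -- objects whose only subobject is the top one
  let E : C → Prop := fun X => ∀ a : Subobject X, ⊤ ≤ a
  have hE : ∀ {X Y : C} (_ : X ⟶ Y), E Y → E X := by
    intro X Y f hY
    have h1 := hpull_bot f ⊤ hY
    rw [Subobject.pullback_top] at h1
    exact h1
  -- a subobject whose domain satisfies `E` is least
  have hEle : ∀ {X : C} (a : Subobject X), E (a : C) → ∀ d, a ≤ d := by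
    intro X a ha d
    have h1 := ha ((Subobject.pullback a.arrow).obj d)
    have h2 : IsIso ((Subobject.pullback a.arrow).obj d).arrow :=
      Subobject.isIso_arrow_iff_eq_top _ |>.2 (top_le_iff.1 h1)
    have h3 := (Subobject.isPullback a.arrow d).w
    refine Subobject.le_of_comm
      (inv ((Subobject.pullback a.arrow).obj d).arrow ≫ Subobject.pullbackπ a.arrow d) ?_
    rw [Category.assoc, h3, IsIso.inv_hom_id_assoc]
  have hET : ¬ E T := by
    intro h
    exact hcons ⊤ h rfl
  obtain ⟨F, ⟨hF, hF0⟩, hcov⟩ := Deligne.abstract_deligne E hE T hET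
  refine ⟨F, ⟨hF⟩, ?_, ?_, ?_⟩
  · intro X Y f hf y
    have hc : Deligne.Cov E f f := by
      intro Z h h1 _ a
      have he := hstab f h hf
      have h2 := h1 ((Subobject.pullback (pullback.snd f h)).obj a)
      have h3 : IsIso ((Subobject.pullback (pullback.snd f h)).obj a).arrow :=
        Subobject.isIso_arrow_iff_eq_top _ |>.2 (top_le_iff.1 h2)
      have h4 := (Subobject.isPullback (pullback.snd f h) a).w
      have h5 : (inv ((Subobject.pullback (pullback.snd f h)).obj a).arrow ≫
          Subobject.pullbackπ (pullback.snd f h) a) ≫ a.arrow = pullback.snd f h := by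
        rw [Category.assoc, h4, IsIso.inv_hom_id_assoc]
      have h6 : StrongEpi (pullback.snd f h) := inferInstance
      have h7 : StrongEpi a.arrow := by
        have h9 : StrongEpi ((inv ((Subobject.pullback (pullback.snd f h)).obj a).arrow ≫
          Subobject.pullbackπ (pullback.snd f h) a) ≫ a.arrow) := by
          rw [h5]; exact h6
        exact strongEpi_of_strongEpi (inv ((Subobject.pullback (pullback.snd f h)).obj a).arrow ≫
          Subobject.pullbackπ (pullback.snd f h) a) a.arrow
      have h8 : IsIso a.arrow := isIso_of_mono_of_strongEpi _
      rw [(Subobject.isIso_arrow_iff_eq_top a).1 h8]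
    rcases hcov f f hc y with h | h <;> exact h
  · intro X a b c hc
    have hac : a ≤ c := hc.1 (by simp)
    have hbc : b ≤ c := hc.1 (by simp)
    have hcv : Deligne.Cov E (Subobject.ofLE a c hac) (Subobject.ofLE b c hbc) := by
      intro Z h h1 h2 d
      have key : ∀ (a : Subobject X) (hac : a ≤ c), E (pullback (Subobject.ofLE a c hac) h) →
          (Subobject.pullback (h ≫ c.arrow)).obj a ≤ d := by
        intro a hac h1
        apply hEle
        refine hE (pullback.lift (Subobject.pullbackπ (h ≫ c.arrow) a)
          ((Subobject.pullback (h ≫ c.arrow)).obj a).arrow ?_) h1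
        rw [← cancel_mono c.arrow, Category.assoc, Category.assoc, Subobject.ofLE_arrow]
        exact (Subobject.isPullback (h ≫ c.arrow) a).w
      have h3 := hpull_join (h ≫ c.arrow) a b c hc
      have h4 : (Subobject.pullback (h ≫ c.arrow)).obj c = ⊤ := by
        rw [Subobject.pullback_comp]
        have := Subobject.pullback_self c.arrow
        rw [Subobject.mk_arrow] at this
        rw [this, Subobject.pullback_top]
      rw [h4] at h3
      apply h3.2
      intro e he
      rcases he with rfl | rfl
      · exact key a hac h1
      · exact key b hbc h2
    have hsub : ∀ (a : Subobject X) (hac : a ≤ c) (x : F.obj (a : C)),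
        F.map c.arrow (F.map (Subobject.ofLE a c hac) x) = F.map a.arrow x := by
      intro a hac x
      rw [← Subobject.ofLE_arrow hac, F.map_comp]
      rfl
    ext x
    constructor
    · rintro ⟨w, rfl⟩
      rcases hcov _ _ hcv w with ⟨v, rfl⟩ | ⟨v, rfl⟩
      · exact Or.inl ⟨v, (hsub a hac v).symm⟩
      · exact Or.inr ⟨v, (hsub b hbc v).symm⟩
    · rintro (⟨v, rfl⟩ | ⟨v, rfl⟩)
      · exact ⟨_, hsub a hac v⟩
      · exact ⟨_, hsub b hbc v⟩
  · intro X z hz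
    have h1 : E (z : C) := by
      have h2 := hpull_bot z.arrow z hz
      have := Subobject.pullback_self z.arrow
      rw [Subobject.mk_arrow] at this
      rw [this] at h2
      exact h2
    have := hF0 _ h1
    exact Set.range_eq_empty _
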